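/- There is a constant C > 0, depending only on W, d, n and m, such that the following holds. Let λ ∈ [1/2,3/2], set ω := λω̄, let Γ ≥ 2, and let (ℓ_q, j_q)_{q=0,…,L} be a Γ-chain of singular sites of D(λ,0). Set x_q := ω·ℓ_q, and define the symmetric bilinear form φ on ℝ × ℝ^d by φ((x,y),(x',y')) := −xx' + ⟨y,y'⟩_W. Then for all q, q₀ ∈ {0,…,L}: |φ((x_{q₀}, j_{q₀}), (x_q − x_{q₀}, j_q − j_{q₀}))| ≤ C |q − q₀|² Γ². -/

import Mathlib

/-- Real cast of an integer vector. -/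
def zc {d : ℕ} (j : Fin d → ℤ) : Fin d → ℝ := fun a => (j a : ℝ)

/-- Eigenvalues of the Laplacian on the flat torus: μ_j = ‖W j‖². -/
noncomputable def mu {d : ℕ} (W : Matrix (Fin d) (Fin d) ℝ) (j : Fin d → ℤ) : ℝ :=
  ∑ i, (W.mulVec (zc j) i) ^ 2

/-- Scalar product ⟨y,y'⟩_W = ⟨Wy, Wy'⟩ induced by W. -/
noncomputable def ipW {d : ℕ} (W : Matrix (Fin d) (Fin d) ℝ) (y y' : Fin d → ℝ) : ℝ :=
  ∑ i, W.mulVec y i * W.mulVec y' i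

/-!
Write `φ` for `waveForm` and `v`, `v₀` for the images in `ℝ × ℝ^d` of two singular sites. Since
`D_{ℓ,j}(λ,0) = φ(v, v) + m`, singularity gives `|φ(v, v) - φ(v₀, v₀)| < 2`, so the polarization
identity `2 φ(v₀, v - v₀) = φ(v, v) - φ(v₀, v₀) - φ(v - v₀, v - v₀)` reduces the claim to the
quadratic growth of `φ` along the displacement of the two sites. The additive constant is absorbed
because distinct lattice sites are at sup-distance at least `1`, and the distance between two sites
of a chain grows at most linearly in the difference of their indices.
-/

section

open scoped Matrix

variable {ι κ η : Type*} [Fintype ι] [Fintype κ] [Fintype η]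

theorem dist_le_abs_sub_mul_of_dist_succ_le {α : Type*} [PseudoMetricSpace α] {L : ℕ}
    {u : Fin (L + 1) → α} {Γ : ℝ} (hu : ∀ q : Fin L, dist (u q.castSucc) (u q.succ) ≤ Γ)
    (p q : Fin (L + 1)) : dist (u q) (u p) ≤ |(q : ℝ) - p| * Γ := by
  wlog hpq : p ≤ q generalizing p q
  · rw [dist_comm, abs_sub_comm]
    exact this q p (le_of_not_ge hpq)
  induction q using Fin.induction with
  | zero => simp [Fin.le_zero_iff.1 hpq]
  | succ q ih =>
    rcases hpq.eq_or_lt with rfl | hlt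
    · simp
    have hle : p ≤ q.castSucc := Fin.le_castSucc_iff.2 hlt
    have hle' : (p : ℝ) ≤ q := by exact_mod_cast hle
    calc dist (u q.succ) (u p)
        ≤ dist (u q.castSucc) (u q.succ) + dist (u q.castSucc) (u p) := dist_triangle_left _ _ _
      _ ≤ Γ + |((q.castSucc : ℕ) : ℝ) - p| * Γ := add_le_add (hu q) (ih hle)
      _ = |((q.succ : ℕ) : ℝ) - p| * Γ := by
        rw [Fin.val_castSucc, Fin.val_succ, Nat.cast_succ, abs_of_nonneg (by linarith),
          abs_of_nonneg (by linarith)]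
        ring

theorem norm_sub_le_abs_of_abs_succ_sub_le {L : ℕ} {u : Fin (L + 1) → ι → ℤ} {Γ : ℝ}
    (hu : ∀ (q : Fin L) (i : ι), ((|u q.succ i - u q.castSucc i| : ℤ) : ℝ) ≤ Γ)
    (p q : Fin (L + 1)) : ‖u q - u p‖ ≤ |((q : ℝ) - p) * Γ| := by
  refine (pi_norm_le_iff_of_nonneg (abs_nonneg _)).2 fun i => ?_
  have hi := dist_le_abs_sub_mul_of_dist_succ_le (u := fun q => u q i) (Γ := Γ)
    (fun q => by simpa [Int.dist_eq, abs_sub_comm] using hu q i) p q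
  calc ‖u q i - u p i‖ = dist (u q i) (u p i) := (dist_eq_norm _ _).symm
    _ ≤ |(q : ℝ) - p| * Γ := hi
    _ ≤ |(q : ℝ) - p| * |Γ| := mul_le_mul_of_nonneg_left (le_abs_self Γ) (abs_nonneg _)
    _ = |((q : ℝ) - p) * Γ| := (abs_mul _ _).symm

theorem one_le_norm_pi_int_of_ne_zero {ℓ : ι → ℤ} (hℓ : ℓ ≠ 0) : 1 ≤ ‖ℓ‖ := by
  obtain ⟨i, hi⟩ := Function.ne_iff.1 hℓ
  calc (1 : ℝ) ≤ ‖ℓ i‖ := by rw [Int.norm_eq_abs]; exact_mod_cast Int.one_le_abs hi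
    _ ≤ ‖ℓ‖ := norm_le_pi_norm ℓ i

theorem one_le_norm_prod_pi_int_of_ne_zero {s : (ι → ℤ) × (κ → ℤ)} (hs : s ≠ 0) : 1 ≤ ‖s‖ := by
  rcases not_and_or.1 (Prod.ext_iff.not.1 hs) with hfst | hsnd
  · exact (one_le_norm_pi_int_of_ne_zero hfst).trans (norm_fst_le s)
  · exact (one_le_norm_pi_int_of_ne_zero hsnd).trans (norm_snd_le s)

theorem norm_intCast_comp (ℓ : ι → ℤ) : ‖((↑) ∘ ℓ : ι → ℝ)‖ = ‖ℓ‖ := by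
  simp only [Pi.norm_def, Function.comp_apply, nnnorm, Int.norm_cast_real]

theorem abs_dotProduct_le_sum_abs_mul_norm (w v : ι → ℝ) : |w ⬝ᵥ v| ≤ (∑ i, |w i|) * ‖v‖ := by
  rw [Finset.sum_mul]
  refine (Finset.abs_sum_le_sum_abs _ _).trans (Finset.sum_le_sum fun i _ => ?_)
  rw [abs_mul]
  exact mul_le_mul_of_nonneg_left (norm_le_pi_norm v i) (abs_nonneg _)

theorem mulVec_dotProduct_self_le (W : Matrix η κ ℝ) (v : κ → ℝ) :
    W *ᵥ v ⬝ᵥ W *ᵥ v ≤ (∑ i, (∑ a, |W i a|) ^ 2) * ‖v‖ ^ 2 := by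
  rw [dotProduct, Finset.sum_mul]
  refine Finset.sum_le_sum fun i _ => ?_
  rw [← mul_pow, ← sq, ← sq_abs]
  exact pow_le_pow_left₀ (abs_nonneg _) (abs_dotProduct_le_sum_abs_mul_norm (W i) v) 2

theorem abs_apply_sub_le_of_isSymm {𝕜 E : Type*} [Field 𝕜] [LinearOrder 𝕜]
    [IsStrictOrderedRing 𝕜] [AddCommGroup E] [Module 𝕜 E] {B : LinearMap.BilinForm 𝕜 E}
    (hB : B.IsSymm) {u v : E} {m r : 𝕜} (hu : |B u u + m| ≤ r) (hv : |B v v + m| ≤ r) :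
    |B u (v - u)| ≤ r + |B (v - u) (v - u)| / 2 := by
  have polarization : 2 * B u (v - u) = (B v v + m) - (B u u + m) - B (v - u) (v - u) := by
    simp only [map_sub, LinearMap.sub_apply, hB.eq v u]
    ring
  have htri : |2 * B u (v - u)| ≤ |B v v + m| + |B u u + m| + |B (v - u) (v - u)| := by
    rw [polarization]
    exact (abs_sub _ _).trans (add_le_add_left (abs_sub _ _) _)
  rw [abs_mul, abs_two] at htri
  linarith

/-- The symmetric bilinear form `φ((x, y), (x', y')) = -x x' + ⟨W y, W y'⟩` on `ℝ × ℝ^κ`, whose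
quadratic form is the symbol of the wave operator. -/
noncomputable def waveForm (W : Matrix η κ ℝ) : LinearMap.BilinForm ℝ (ℝ × (κ → ℝ)) :=
  (dotProductBilin ℝ ℝ).compl₁₂ (W.mulVecLin ∘ₗ LinearMap.snd ℝ ℝ _)
      (W.mulVecLin ∘ₗ LinearMap.snd ℝ ℝ _) -
    (LinearMap.mul ℝ ℝ).compl₁₂ (LinearMap.fst ℝ ℝ _) (LinearMap.fst ℝ ℝ _)

theorem waveForm_apply (W : Matrix η κ ℝ) (u v : ℝ × (κ → ℝ)) :
    waveForm W u v = W *ᵥ u.2 ⬝ᵥ W *ᵥ v.2 - u.1 * v.1 :=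
  rfl

theorem waveForm_isSymm (W : Matrix η κ ℝ) : (waveForm W).IsSymm :=
  ⟨fun u v => by rw [waveForm_apply, waveForm_apply, dotProduct_comm, mul_comm]⟩

/-- The vector `(ω · ℓ, j)` of `ℝ × ℝ^κ` attached to the lattice site `(ℓ, j)`. -/
def siteVector {κ : Type*} (ω : ι → ℝ) : (ι → ℤ) × (κ → ℤ) →+ ℝ × (κ → ℝ) where
  toFun s := (ω ⬝ᵥ ((↑) ∘ s.1), (↑) ∘ s.2)
  map_zero' := by ext <;> simp
  map_add' s t := by ext <;> simp [dotProduct, mul_add, Finset.sum_add_distrib]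

theorem abs_waveForm_siteVector_self_le (W : Matrix η κ ℝ) {ω : ι → ℝ} {R : ℝ}
    (hω : ∑ i, |ω i| ≤ R) (s : (ι → ℤ) × (κ → ℤ)) :
    |waveForm W (siteVector ω s) (siteVector ω s)| ≤
      (R ^ 2 + ∑ i, (∑ a, |W i a|) ^ 2) * ‖s‖ ^ 2 := by
  set x : ℝ := (siteVector ω s).1
  set y : κ → ℝ := (siteVector ω s).2
  have hx : x ^ 2 ≤ R ^ 2 * ‖s‖ ^ 2 := by
    rw [← mul_pow, ← sq_abs]
    refine pow_le_pow_left₀ (abs_nonneg _) ?_ 2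
    calc |x| ≤ (∑ i, |ω i|) * ‖((↑) ∘ s.1 : ι → ℝ)‖ := abs_dotProduct_le_sum_abs_mul_norm _ _
      _ ≤ R * ‖s‖ := by
        rw [norm_intCast_comp]
        exact mul_le_mul hω (norm_fst_le s) (norm_nonneg _)
          ((Finset.sum_nonneg fun _ _ => abs_nonneg _).trans hω)
  have hy : W *ᵥ y ⬝ᵥ W *ᵥ y ≤ (∑ i, (∑ a, |W i a|) ^ 2) * ‖s‖ ^ 2 := by
    have hys : ‖y‖ ≤ ‖s‖ := (norm_intCast_comp s.2).trans_le (norm_snd_le s)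
    exact (mulVec_dotProduct_self_le W y).trans (by gcongr)
  have hy_nonneg : 0 ≤ W *ᵥ y ⬝ᵥ W *ᵥ y := Finset.sum_nonneg fun _ _ => mul_self_nonneg _
  calc |waveForm W (siteVector ω s) (siteVector ω s)|
      ≤ |W *ᵥ y ⬝ᵥ W *ᵥ y| + |x * x| := abs_sub _ _
    _ = W *ᵥ y ⬝ᵥ W *ᵥ y + x ^ 2 := by rw [abs_of_nonneg hy_nonneg, abs_mul_self, sq]
    _ ≤ (R ^ 2 + ∑ i, (∑ a, |W i a|) ^ 2) * ‖s‖ ^ 2 := by linarith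

theorem abs_waveForm_siteVector_sub_le (W : Matrix η κ ℝ) {ω : ι → ℝ} {R m : ℝ}
    (hω : ∑ i, |ω i| ≤ R) {s t : (ι → ℤ) × (κ → ℤ)}
    (hs : |waveForm W (siteVector ω s) (siteVector ω s) + m| ≤ 1)
    (ht : |waveForm W (siteVector ω t) (siteVector ω t) + m| ≤ 1) :
    |waveForm W (siteVector ω s) (siteVector ω t - siteVector ω s)| ≤
      (1 + (R ^ 2 + ∑ i, (∑ a, |W i a|) ^ 2) / 2) * ‖t - s‖ ^ 2 := by
  rcases eq_or_ne t s with rfl | hts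
  · simp
  have hdist : 1 ≤ ‖t - s‖ ^ 2 :=
    one_le_pow₀ (one_le_norm_prod_pi_int_of_ne_zero (sub_ne_zero.2 hts))
  have hform := abs_apply_sub_le_of_isSymm (waveForm_isSymm W) hs ht
  have hgrowth := abs_waveForm_siteVector_self_le W hω (t - s)
  rw [map_sub] at hgrowth
  linarith

theorem waveForm_siteVector_self_eq_mu {d : ℕ} (W : Matrix (Fin d) (Fin d) ℝ) (ω : ι → ℝ)
    (ℓ : ι → ℤ) (j : Fin d → ℤ) :
    waveForm W (siteVector ω (ℓ, j)) (siteVector ω (ℓ, j)) =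
      -((∑ i, ω i * (ℓ i : ℝ)) ^ 2) + mu W j := by
  have hmu : mu W j = W.mulVec (zc j) ⬝ᵥ W.mulVec (zc j) :=
    Finset.sum_congr rfl fun _ _ => sq _
  rw [hmu, sq, neg_add_eq_sub]
  rfl

theorem waveForm_siteVector_sub_eq_ipW {d : ℕ} (W : Matrix (Fin d) (Fin d) ℝ) (ω : ι → ℝ)
    (ℓ ℓ' : ι → ℤ) (j j' : Fin d → ℤ) :
    waveForm W (siteVector ω (ℓ, j)) (siteVector ω (ℓ', j') - siteVector ω (ℓ, j)) =
      -((∑ i, ω i * (ℓ i : ℝ)) * (∑ i, ω i * (ℓ' i : ℝ) - ∑ i, ω i * (ℓ i : ℝ))) +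
        ipW W (zc j) (zc (j' - j)) := by
  have hzc : zc (j' - j) = zc j' - zc j := funext fun _ => Int.cast_sub _ _
  rw [hzc, neg_add_eq_sub]
  rfl

end

theorem bilinear_form_bound_NLW_chain_general {d n L : ℕ} (W : Matrix (Fin d) (Fin d) ℝ)
    {ω : Fin n → ℝ} {R m Γ : ℝ} (hω : ∑ i, |ω i| ≤ R)
    {ℓ : Fin (L + 1) → Fin n → ℤ} {j : Fin (L + 1) → Fin d → ℤ}
    (hchain : ∀ q : Fin L,
      (∀ i, ((|ℓ q.succ i - ℓ q.castSucc i| : ℤ) : ℝ) ≤ Γ) ∧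
      (∀ a, ((|j q.succ a - j q.castSucc a| : ℤ) : ℝ) ≤ Γ))
    {q q₀ : Fin (L + 1)}
    (hq : |-((∑ i, ω i * (ℓ q i : ℝ)) ^ 2) + mu W (j q) + m| ≤ 1)
    (hq₀ : |-((∑ i, ω i * (ℓ q₀ i : ℝ)) ^ 2) + mu W (j q₀) + m| ≤ 1) :
    |-((∑ i, ω i * (ℓ q₀ i : ℝ)) * (∑ i, ω i * (ℓ q i : ℝ) - ∑ i, ω i * (ℓ q₀ i : ℝ))) +
        ipW W (zc (j q₀)) (zc (j q - j q₀))| ≤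
      (1 + (R ^ 2 + ∑ i, (∑ a, |W i a|) ^ 2) / 2) *
        ((|((q : ℕ) : ℤ) - ((q₀ : ℕ) : ℤ)| : ℤ) : ℝ) ^ 2 * Γ ^ 2 := by
  have hdist : ‖(ℓ q, j q) - (ℓ q₀, j q₀)‖ ≤ |((q : ℝ) - q₀) * Γ| :=
    max_le (norm_sub_le_abs_of_abs_succ_sub_le (fun p => (hchain p).1) q₀ q)
      (norm_sub_le_abs_of_abs_succ_sub_le (fun p => (hchain p).2) q₀ q)
  rw [← waveForm_siteVector_self_eq_mu] at hq hq₀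
  rw [← waveForm_siteVector_sub_eq_ipW]
  calc _ ≤ (1 + (R ^ 2 + ∑ i, (∑ a, |W i a|) ^ 2) / 2) * ‖(ℓ q, j q) - (ℓ q₀, j q₀)‖ ^ 2 :=
        abs_waveForm_siteVector_sub_le W hω hq₀ hq
    _ ≤ (1 + (R ^ 2 + ∑ i, (∑ a, |W i a|) ^ 2) / 2) * |((q : ℝ) - q₀) * Γ| ^ 2 := by gcongr
    _ = _ := by
      push_cast
      rw [sq_abs, sq_abs, mul_pow, mul_assoc]

theorem bilinear_form_bound_NLW_chain
    (d : ℕ) (hd : 1 ≤ d) (W : Matrix (Fin d) (Fin d) ℝ) (hW : IsUnit W.det)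
    (n : ℕ) (hn : 1 ≤ n) (m : ℝ) (hm : 0 < m) :
    ∃ C : ℝ, 0 < C ∧
      ∀ (ω : Fin n → ℝ), (∑ i, |ω i|) ≤ 1 →
      ∀ (lam : ℝ), lam ∈ Set.Icc (1/2 : ℝ) (3/2) →
      ∀ (Γ : ℝ), 2 ≤ Γ →
      ∀ (L : ℕ) (ℓ : Fin (L + 1) → Fin n → ℤ) (j : Fin (L + 1) → Fin d → ℤ),
        -- the sites are pairwise distinct
        Function.Injective (fun q => (ℓ q, j q)) →
        -- every site is singular for D(λ,0)
        (∀ q, |-((lam * (∑ i, ω i * (ℓ q i : ℝ))) ^ 2) + mu W (j q) + m| < 1) →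
        -- consecutive sites are at sup-distance ≤ Γ
        (∀ q : Fin L,
          (∀ i, ((|ℓ q.succ i - ℓ q.castSucc i| : ℤ) : ℝ) ≤ Γ) ∧
          (∀ a, ((|j q.succ a - j q.castSucc a| : ℤ) : ℝ) ≤ Γ)) →
        -- with x_q := ω·ℓ_q (here ω = λ ω̄),
        -- |φ((x_{q₀}, j_{q₀}), (x_q − x_{q₀}, j_q − j_{q₀}))| ≤ C |q − q₀|² Γ²
        ∀ q q₀ : Fin (L + 1),
          |(-((lam * ∑ i, ω i * (ℓ q₀ i : ℝ)) *
              ((lam * ∑ i, ω i * (ℓ q i : ℝ)) - lam * ∑ i, ω i * (ℓ q₀ i : ℝ)))) +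
            ipW W (zc (j q₀)) (zc (j q - j q₀))| ≤
          C * ((|((q : ℕ) : ℤ) - ((q₀ : ℕ) : ℤ)| : ℤ) : ℝ) ^ 2 * Γ ^ 2 := by
  refine ⟨1 + ((3 / 2) ^ 2 + ∑ i, (∑ a, |W i a|) ^ 2) / 2, by positivity, ?_⟩
  intro ω hω lam hlam Γ _ L ℓ j _ hsing hchain q q₀
  have hlamω := (mul_le_of_le_one_right (abs_nonneg lam) hω).trans
    (abs_le.2 ⟨by linarith [hlam.1], hlam.2⟩ : |lam| ≤ 3 / 2)
  simp only [Finset.mul_sum, ← abs_mul, ← mul_assoc] at hlamω hsing ⊢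
  exact bilinear_form_bound_NLW_chain_general W hlamω hchain (hsing q).le (hsing q₀).le
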